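/- Let g = D(2,1;a) with a ∈ Q \ {0,−1}, with Chevalley-type generators h_i, e_i, f_i (i = 1,2,3) subject to [h_i,h_j]=0, [e_1,e_1]=[f_1,f_1]=0, [h_i,e_j]=a_{ij}e_j, [h_i,f_j]=−a_{ij}f_j, [e_i,f_j]=δ_{ij}h_i, where the Cartan matrix has rows (0,1,a),(−1,2,0),(−1,0,2). Then the bilinear form determined by (e_1,f_1)=1, (e_2,f_2)=−1, (e_3,f_3)=−1/a, (h_1,h_2)=−1, (h_1,h_3)=−1, (h_2,h_2)=−2, (h_3,h_3)=−2/a (all other pairings of generators zero), extended by invariance, is an even supersymmetric invariant bilinear form on g taking values in Q on the Chevalley basis. -/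

import Mathlib

/-- The Chevalley basis of `D(2,1;a)` built from the generators `hᵢ, eᵢ, fᵢ` (`i = 0,1,2`
here, corresponding to `i = 1,2,3` in the usual notation):
`{H₁, H₂, H₃, e₁, e₂, e₃, f₁, f₂, f₃, e₁₂, e₁₃, e₁₂₃, e₁₁₂₃, f₂₁, f₃₁, f₃₂₁, f₃₂₁₁}`. -/
def chevalleyBasisD21a {L : Type*} [AddCommGroup L] [Module ℂ L]
    (br : L →ₗ[ℂ] L →ₗ[ℂ] L) (a : ℚ) (h e f : Fin 3 → L) : Set L :=
  { h 0,
    (1 / (1 + (a : ℂ))) • ((2 : ℂ) • h 0 - h 1 - (a : ℂ) • h 2),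
    h 2,
    e 0, e 1, e 2, f 0, f 1, f 2,
    br (e 0) (e 1), br (e 0) (e 2), br (br (e 0) (e 1)) (e 2),
    (1 / (1 + (a : ℂ))) • br (e 0) (br (br (e 0) (e 1)) (e 2)),
    br (f 1) (f 0), br (f 2) (f 0), br (f 2) (br (f 1) (f 0)),
    -((1 / (1 + (a : ℂ))) • br (br (f 2) (br (f 1) (f 0))) (f 0)) }

/-! The seven root vectors obtained from the `eᵢ`, the seven obtained from the `fᵢ`, and the `hᵢ`
are eigenvectors of one element of the Cartan subalgebra. It separates the roots, so a dimension
count makes these seventeen vectors a basis, and any bracket whose weight is not a root vanishes.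

Let `B` be the form pairing each root vector with its negative, with the coefficients that
invariance forces. Invariance under `eᵢ` only needs checking on triples of total weight zero, that
is, along the seven pairs of positive roots differing by a simple root. The relations are preserved
by `h ↦ -h`, `e ↦ f`, `f ↦ (-e₁, e₂, e₃)`, which fixes `B` and so carries invariance under the `eᵢ`
to the `fᵢ`. Invariance then spreads to all of `g`, because the elements under which `B` is
invariant form a subspace that is stable under brackets of homogeneous elements. -/

section LieSuperalgebra

variable {R L : Type*} [CommRing R] [AddCommGroup L] [Module R L]
  {br : L →ₗ[R] L →ₗ[R] L} {P : Bool → Submodule R L} {B : L →ₗ[R] L →ₗ[R] R}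

/-- `br` is a Lie superbracket on the superspace with even part `P false` and odd part `P true`. -/
structure IsLieSuperalgebra (br : L →ₗ[R] L →ₗ[R] L) (P : Bool → Submodule R L) : Prop where
  isCompl : IsCompl (P false) (P true)
  br_mem : ∀ p q, ∀ x ∈ P p, ∀ y ∈ P q, br x y ∈ P (xor p q)
  skew : ∀ p q, ∀ x ∈ P p, ∀ y ∈ P q, br x y = (if p && q then (1 : R) else -1) • br y x
  jacobi : ∀ p q, ∀ x ∈ P p, ∀ y ∈ P q, ∀ z,
    br x (br y z) = br (br x y) z + (if p && q then (-1 : R) else 1) • br y (br x z)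

/-- Supersymmetry of a bilinear form on the superspace `P`. The form may still pair `P false` with
`P true`: evenness is a separate condition. -/
def IsSupersymmetric (P : Bool → Submodule R L) (B : L →ₗ[R] L →ₗ[R] R) : Prop :=
  ∀ p q, ∀ x ∈ P p, ∀ y ∈ P q, B x y = (if p && q then (-1 : R) else 1) * B y x

/-- The elements under which `B` is invariant: those `y` that can be moved from one side of the
form to the other. -/
def invariantSubmodule (br : L →ₗ[R] L →ₗ[R] L) (B : L →ₗ[R] L →ₗ[R] R) : Submodule R L where
  carrier := {y | ∀ x z, B (br x y) z = B x (br y z)}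
  add_mem' hy hy' x z := by simp [hy x z, hy' x z]
  zero_mem' := by simp
  smul_mem' c y hy x z := by simp [hy x z]

theorem mem_invariantSubmodule {y : L} :
    y ∈ invariantSubmodule br B ↔ ∀ x z, B (br x y) z = B x (br y z) :=
  Iff.rfl

theorem mem_invariantSubmodule_of_span {ι : Type*} {v : ι → L}
    (hspan : Submodule.span R (Set.range v) = ⊤) {y : L}
    (h : ∀ j k, B (br (v j) y) (v k) = B (v j) (br y (v k))) : y ∈ invariantSubmodule br B := by
  intro x z
  have hx : x ∈ Submodule.span R (Set.range v) := hspan ▸ Submodule.mem_top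
  have hz : z ∈ Submodule.span R (Set.range v) := hspan ▸ Submodule.mem_top
  induction hx, hz using Submodule.span_induction₂ with
  | mem_mem x z hx hz =>
    obtain ⟨j, rfl⟩ := hx
    obtain ⟨k, rfl⟩ := hz
    exact h j k
  | zero_left | zero_right => simp
  | add_left | add_right | smul_left | smul_right => simp_all

namespace IsLieSuperalgebra

theorem induction_homogeneous (S : IsLieSuperalgebra br P) {motive : L → Prop}
    (hom : ∀ p, ∀ x ∈ P p, motive x) (add : ∀ x y, motive x → motive y → motive (x + y))
    (x : L) : motive x := by
  have hx : x ∈ P false ⊔ P true := S.isCompl.sup_eq_top ▸ Submodule.mem_top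
  obtain ⟨u, hu, v, hv, rfl⟩ := Submodule.mem_sup.1 hx
  exact add u v (hom _ u hu) (hom _ v hv)

theorem skew_of_even (S : IsLieSuperalgebra br P) {x : L} (hx : x ∈ P false) (y : L) :
    br x y = -br y x := by
  induction y using S.induction_homogeneous with
  | hom p y hy => simpa using S.skew false p x hx y hy
  | add u v hu hv => simp [hu, hv, add_comm]

theorem skew_of_odd (S : IsLieSuperalgebra br P) {x y : L} (hx : x ∈ P true) (hy : y ∈ P true) :
    br x y = br y x := by
  simpa using S.skew true true x hx y hy

theorem jacobi_of_even (S : IsLieSuperalgebra br P) {x : L} (hx : x ∈ P false) (y z : L) :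
    br x (br y z) = br (br x y) z + br y (br x z) := by
  induction y using S.induction_homogeneous with
  | hom p y hy => simpa using S.jacobi false p x hx y hy z
  | add u v hu hv => simp [hu, hv, add_add_add_comm]

theorem jacobi_of_odd (S : IsLieSuperalgebra br P) {x y : L} (hx : x ∈ P true) (hy : y ∈ P true)
    (z : L) : br x (br y z) = br (br x y) z - br y (br x z) := by
  simpa [sub_eq_add_neg] using S.jacobi true true x hx y hy z

theorem br_smul_of_eigenvectors (S : IsLieSuperalgebra br P) {d x y : L} (hd : d ∈ P false)
    {m n : R} (hx : br d x = m • x) (hy : br d y = n • y) :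
    br d (br x y) = (m + n) • br x y := by
  simp [S.jacobi_of_even hd, hx, hy, add_smul]

theorem br_mem_invariantSubmodule (S : IsLieSuperalgebra br P) {p q : Bool} {y y' : L}
    (hp : y ∈ P p) (hq : y' ∈ P q) (hy : y ∈ invariantSubmodule br B)
    (hy' : y' ∈ invariantSubmodule br B) : br y y' ∈ invariantSubmodule br B := by
  rw [mem_invariantSubmodule] at *
  intro x z
  induction x using S.induction_homogeneous with
  | add u v hu hv => simp [hu, hv]
  | hom r x hx =>
    have jacobi_left := S.jacobi _ _ _ hx _ hp y'
    have skew_left := S.skew _ _ _ hp _ (S.br_mem _ _ _ hx _ hq)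
    have jacobi_right : br (br y y') z = br y (br y' z) -
        (if p && q then (-1 : R) else 1) • br y' (br y z) := by
      rw [S.jacobi _ _ _ hp _ hq z, add_sub_cancel_right]
    rw [jacobi_left, skew_left, jacobi_right]
    simp only [map_add, map_smul, map_sub, LinearMap.add_apply, LinearMap.smul_apply, hy, hy']
    cases p <;> cases q <;> cases r <;> simp <;> ring

theorem invariant_reverse (S : IsLieSuperalgebra br P) (hB : IsSupersymmetric P B) {p q r : Bool}
    {x y z : L} (hx : x ∈ P p) (hy : y ∈ P q) (hz : z ∈ P r)
    (h : B (br x y) z = B x (br y z)) : B (br z y) x = B z (br y x) := by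
  rw [S.skew _ _ _ hz _ hy, S.skew _ _ _ hy _ hx, map_smul, map_smul, LinearMap.smul_apply,
    hB _ _ _ (S.br_mem _ _ _ hy _ hz) _ hx, hB _ _ _ hz _ (S.br_mem _ _ _ hx _ hy), h]
  cases p <;> cases q <;> cases r <;> simp

end IsLieSuperalgebra

theorem parity_eq_span {ι : Type*} {v : ι → L} {par : ι → Bool}
    (hP : IsCompl (P false) (P true)) (hv : ∀ j, v j ∈ P (par j))
    (hspan : Submodule.span R (Set.range v) = ⊤) (p : Bool) :
    P p = Submodule.span R (v '' {j | par j = p}) := by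
  have span_le : ∀ q, Submodule.span R (v '' {j | par j = q}) ≤ P q := by
    rintro q
    rw [Submodule.span_le]
    rintro _ ⟨j, rfl, rfl⟩
    exact hv j
  have disjoint : Disjoint (P p) (P !p) := by
    cases p
    exacts [hP.disjoint, hP.disjoint.symm]
  refine (eq_of_le_of_inf_le_of_le_sup (z := Submodule.span R (v '' {j | par j = !p}))
    (span_le p) ?_ ?_).symm
  · exact (disjoint.mono_right (span_le _)).le_bot.trans bot_le
  · rw [← Submodule.span_union, ← Set.image_union]
    have : {j | par j = p} ∪ {j | par j = !p} = Set.univ := by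
      ext j
      cases h : par j <;> cases p <;> simp [h]
    rw [this, Set.image_univ, hspan]
    exact le_top

theorem apply_eq_zero_of_parity {ι : Type*} {v : ι → L} {par : ι → Bool}
    (hP : IsCompl (P false) (P true)) (hv : ∀ j, v j ∈ P (par j))
    (hspan : Submodule.span R (Set.range v) = ⊤) {p q : Bool}
    (hB : ∀ j k, par j = p → par k = q → B (v j) (v k) = 0)
    {x y : L} (hx : x ∈ P p) (hy : y ∈ P q) : B x y = 0 := by
  rw [parity_eq_span hP hv hspan] at hx hy
  induction hx, hy using Submodule.span_induction₂ with
  | mem_mem x y hx hy =>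
    obtain ⟨j, hj, rfl⟩ := hx
    obtain ⟨k, hk, rfl⟩ := hy
    exact hB j k hj hk
  | zero_left | zero_right => simp
  | add_left | add_right | smul_left | smul_right => simp_all

theorem isSupersymmetric_of_span {ι : Type*} {v : ι → L} {par : ι → Bool}
    (hP : IsCompl (P false) (P true)) (hv : ∀ j, v j ∈ P (par j))
    (hspan : Submodule.span R (Set.range v) = ⊤)
    (hB : ∀ j k, B (v j) (v k) = (if par j && par k then (-1 : R) else 1) * B (v k) (v j)) :
    IsSupersymmetric P B := by
  intro p q x hx y hy
  have := apply_eq_zero_of_parity (B := B - (if p && q then (-1 : R) else 1) • B.flip) hP hv hspan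
    (by
      rintro j k rfl rfl
      simp only [LinearMap.sub_apply, LinearMap.smul_apply, LinearMap.flip_apply, smul_eq_mul,
        hB j k, sub_self]) hx hy
  simpa only [LinearMap.sub_apply, LinearMap.smul_apply, LinearMap.flip_apply, smul_eq_mul,
    sub_eq_zero] using this

end LieSuperalgebra

section Eigenvectors

variable {K L : Type*} [Field K] [AddCommGroup L] [Module K L] {T : Module.End K L}

theorem eq_zero_of_eigenvectors_span {ι : Type*} {v : ι → L} {μ : ι → K}
    (hv : ∀ j, T (v j) = μ j • v j) (hspan : Submodule.span K (Set.range v) = ⊤)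
    {c : K} (hc : ∀ j, μ j ≠ c) {x : L} (hx : T x = c • x) : x = 0 := by
  have top_le : ⊤ ≤ ⨆ m ≠ c, T.eigenspace m := by
    rw [← hspan, Submodule.span_le]
    rintro _ ⟨j, rfl⟩
    exact Submodule.mem_iSup_of_mem _ (Submodule.mem_iSup_of_mem (hc j)
      (Module.End.mem_eigenspace_iff.2 (hv j)))
  exact Submodule.disjoint_def.1 (T.eigenspaces_iSupIndep c) x
    (Module.End.mem_eigenspace_iff.2 hx) (top_le Submodule.mem_top)

theorem linearIndependent_sum_of_eigenvectors {ι κ : Type*} {u : ι → L} {v : κ → L} {μ : κ → K}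
    (hu : LinearIndependent K u) (hTu : ∀ i, T (u i) = 0) (hTv : ∀ j, T (v j) = μ j • v j)
    (hv : ∀ j, v j ≠ 0) (hμ : Function.Injective μ) (hμ0 : ∀ j, μ j ≠ 0) :
    LinearIndependent K (Sum.elim u v) := by
  have mem_eigenspace j : v j ∈ T.eigenspace (μ j) := Module.End.mem_eigenspace_iff.2 (hTv j)
  refine hu.sum_type (Module.End.eigenvectors_linearIndependent' T μ hμ v
    fun j => ⟨mem_eigenspace j, hv j⟩) ((T.eigenspaces_iSupIndep 0).mono ?_ ?_)
  · rw [Submodule.span_le]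
    rintro _ ⟨i, rfl⟩
    exact Module.End.mem_eigenspace_iff.2 (by rw [hTu, zero_smul])
  · rw [Submodule.span_le]
    rintro _ ⟨j, rfl⟩
    exact Submodule.mem_iSup_of_mem _ (Submodule.mem_iSup_of_mem (hμ0 j) (mem_eigenspace j))

theorem apply_eq_zero_of_eigenvectors {B : L →ₗ[K] L →ₗ[K] K} (hB : B.IsSkewAdjoint T) {m n : K}
    (hmn : m + n ≠ 0) {x y : L} (hx : T x = m • x) (hy : T y = n • y) : B x y = 0 := by
  have h : m * B x y = -(n * B x y) := by simpa [hx, hy] using hB x y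
  exact (mul_eq_zero.1 (show (m + n) * B x y = 0 by linear_combination h)).resolve_left hmn

theorem apply_mem_of_mem_span {B : L →ₗ[K] L →ₗ[K] K} (k : Subfield K) {s : Set L}
    (hs : ∀ x ∈ s, ∀ y ∈ s, B x y ∈ k) {x y : L} (hx : x ∈ Submodule.span k s)
    (hy : y ∈ Submodule.span k s) : B x y ∈ k := by
  induction hx, hy using Submodule.span_induction₂ with
  | mem_mem x y hx hy => exact hs x hx y hy
  | zero_left | zero_right => simp
  | add_left x y z _ _ _ hxz hyz => simpa using add_mem hxz hyz
  | add_right x y z _ _ _ hxy hxz => simpa using add_mem hxy hxz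
  | smul_left c x y _ _ h => simpa [Subfield.smul_def] using mul_mem c.2 h
  | smul_right c x y _ _ h => simpa [Subfield.smul_def] using mul_mem c.2 h

end Eigenvectors

namespace D21

section Generators

variable {R L : Type*} [CommRing R] [AddCommGroup L] [Module R L]

/-- The Cartan matrix of `D(2,1;a)`. -/
def cartan (a : R) : Matrix (Fin 3) (Fin 3) R :=
  !![0, 1, a; -1, 2, 0; -1, 0, 2]

/-- Chevalley generators `hᵢ, eᵢ, fᵢ` of type `D(2,1;a)` in a Lie superalgebra, with indices
starting at `0`: `e 0` and `f 0` are the odd ones. -/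
structure Generators (a : R) (br : L →ₗ[R] L →ₗ[R] L) (P : Bool → Submodule R L)
    (h e f : Fin 3 → L) : Prop extends IsLieSuperalgebra br P where
  h_mem : ∀ i, h i ∈ P false
  e_odd : e 0 ∈ P true
  f_odd : f 0 ∈ P true
  e_even : ∀ i, i ≠ 0 → e i ∈ P false
  f_even : ∀ i, i ≠ 0 → f i ∈ P false
  h_h : ∀ i j, br (h i) (h j) = 0
  h_e : ∀ i j, br (h i) (e j) = cartan a i j • e j
  h_f : ∀ i j, br (h i) (f j) = -(cartan a i j • f j)
  e_f : ∀ i j, br (e i) (f j) = if i = j then h i else 0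

/-- The vectors `e₁, e₂, e₃, e₁₂, e₁₃, e₁₂₃, [e₁, e₁₂₃]` of the seven positive roots. This order of
the positive roots is used throughout. -/
def rootVec (br : L →ₗ[R] L →ₗ[R] L) (e : Fin 3 → L) : Fin 7 → L :=
  ![e 0, e 1, e 2, br (e 0) (e 1), br (e 0) (e 2), br (br (e 0) (e 1)) (e 2),
    br (e 0) (br (br (e 0) (e 1)) (e 2))]

/-- The position of the simple root `αᵢ` among the positive roots. -/
def simple : Fin 3 → Fin 7 :=
  ![0, 1, 2]

/-- The values at the positive roots of the additive function equal to `w i` at `αᵢ`. -/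
def posRootSum {M : Type*} [Add M] (w : Fin 3 → M) : Fin 7 → M :=
  ![w 0, w 1, w 2, w 0 + w 1, w 0 + w 2, w 0 + w 1 + w 2, w 0 + (w 0 + w 1 + w 2)]

/-- The parities of the positive roots. -/
def posRootParity : Fin 7 → Bool :=
  ![true, false, false, true, true, true, false]

/-- The sign change of the first generator that makes `e ↦ f`, `f ↦ twist e` preserve the relations.
It is forced by `[f₁, e₁] = [e₁, f₁]`, in contrast to `[fᵢ, eᵢ] = -[eᵢ, fᵢ]` for `i = 2, 3`. -/
def twist (e : Fin 3 → L) : Fin 3 → L :=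
  ![-e 0, e 1, e 2]

theorem rootVec_simple (br : L →ₗ[R] L →ₗ[R] L) (e : Fin 3 → L) (i : Fin 3) :
    rootVec br e (simple i) = e i := by
  fin_cases i <;> rfl

theorem rootVec_twist (br : L →ₗ[R] L →ₗ[R] L) (e : Fin 3 → L) (k : Fin 7) :
    rootVec br (twist e) k = (if posRootParity k then (-1 : R) else 1) • rootVec br e k := by
  fin_cases k <;> simp [rootVec, twist, posRootParity]

namespace Generators

variable {a : R} {br : L →ₗ[R] L →ₗ[R] L} {P : Bool → Submodule R L} {h e f : Fin 3 → L}

theorem e_mem (S : Generators a br P h e f) (i : Fin 3) : e i ∈ P (decide (i = 0)) := by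
  rcases eq_or_ne i 0 with rfl | hi
  · simpa using S.e_odd
  · simpa [hi] using S.e_even i hi

theorem f_mem (S : Generators a br P h e f) (i : Fin 3) : f i ∈ P (decide (i = 0)) := by
  rcases eq_or_ne i 0 with rfl | hi
  · simpa using S.f_odd
  · simpa [hi] using S.f_even i hi

theorem f_e (S : Generators a br P h e f) (i j : Fin 3) :
    br (f i) (e j) = if i = j then (if i = 0 then h i else -h i) else 0 := by
  have ef := S.e_f j i
  have skew := S.skew _ _ _ (S.f_mem i) _ (S.e_mem j)
  rw [ef] at skew
  rw [skew]
  fin_cases i <;> fin_cases j <;> simp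

theorem flip (S : Generators a br P h e f) : Generators a br P (-h) f (twist e) where
  __ := S.toIsLieSuperalgebra
  h_mem i := neg_mem (S.h_mem i)
  e_odd := S.f_odd
  f_odd := neg_mem S.e_odd
  e_even := S.f_even
  f_even i hi := by
    have := S.e_even i hi
    fin_cases i
    exacts [absurd rfl hi, this, this]
  h_h i j := by simp [S.h_h]
  h_e i j := by simp [S.h_f]
  h_f i j := by fin_cases j <;> simp [twist, S.h_e]
  e_f i j := by fin_cases i <;> fin_cases j <;> simp [twist, S.f_e]

theorem e_h (S : Generators a br P h e f) (i j : Fin 3) :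
    br (e i) (h j) = -(cartan a j i • e i) := by
  rw [← S.h_e, S.skew_of_even (S.h_mem j), neg_neg]

theorem br_sum_h_e (S : Generators a br P h e f) (c : Fin 3 → R) (j : Fin 3) :
    br (∑ i, c i • h i) (e j) = (Matrix.vecMul c (cartan a)) j • e j := by
  simp [S.h_e, Matrix.vecMul, dotProduct, Finset.sum_smul, smul_smul]

theorem rootVec_mem (S : Generators a br P h e f) (k : Fin 7) :
    rootVec br e k ∈ P (posRootParity k) := by
  have e01 := S.br_mem _ _ _ S.e_odd _ (S.e_mem 1)
  have e02 := S.br_mem _ _ _ S.e_odd _ (S.e_mem 2)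
  have e012 := S.br_mem _ _ _ e01 _ (S.e_mem 2)
  have e0012 := S.br_mem _ _ _ S.e_odd _ e012
  fin_cases k
  exacts [S.e_odd, S.e_mem 1, S.e_mem 2, e01, e02, e012, e0012]

theorem rootVec_mem_invariantSubmodule (S : Generators a br P h e f) {B : L →ₗ[R] L →ₗ[R] R}
    (he : ∀ i, e i ∈ invariantSubmodule br B) (k : Fin 7) :
    rootVec br e k ∈ invariantSubmodule br B := by
  have e01 := S.br_mem_invariantSubmodule (S.e_mem 0) (S.e_mem 1) (he 0) (he 1)
  have e02 := S.br_mem_invariantSubmodule (S.e_mem 0) (S.e_mem 2) (he 0) (he 2)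
  have e012 := S.br_mem_invariantSubmodule (S.rootVec_mem 3) (S.e_mem 2) e01 (he 2)
  have e0012 := S.br_mem_invariantSubmodule (S.e_mem 0) (S.rootVec_mem 5) (he 0) e012
  fin_cases k
  exacts [he 0, he 1, he 2, e01, e02, e012, e0012]

theorem br_rootVec_of_eigenvectors (S : Generators a br P h e f) {d : L} (hd : d ∈ P false)
    {w : Fin 3 → R} (hw : ∀ i, br d (e i) = w i • e i) (k : Fin 7) :
    br d (rootVec br e k) = posRootSum w k • rootVec br e k := by
  have e01 := S.br_smul_of_eigenvectors hd (hw 0) (hw 1)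
  have e02 := S.br_smul_of_eigenvectors hd (hw 0) (hw 2)
  have e012 := S.br_smul_of_eigenvectors hd e01 (hw 2)
  have e0012 := S.br_smul_of_eigenvectors hd (hw 0) e012
  fin_cases k
  exacts [hw 0, hw 1, hw 2, e01, e02, e012, e0012]

theorem h_rootVec (S : Generators a br P h e f) (i : Fin 3) (k : Fin 7) :
    br (h i) (rootVec br e k) = posRootSum (cartan a i) k • rootVec br e k :=
  S.br_rootVec_of_eigenvectors (S.h_mem i) (S.h_e i) k

theorem f0_e01 (S : Generators a br P h e f) : br (f 0) (br (e 0) (e 1)) = e 1 := by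
  simp [S.jacobi_of_odd S.f_odd S.e_odd, S.f_e, S.h_e, cartan]

theorem f0_e02 (S : Generators a br P h e f) : br (f 0) (br (e 0) (e 2)) = a • e 2 := by
  simp [S.jacobi_of_odd S.f_odd S.e_odd, S.f_e, S.h_e, cartan]

theorem f1_e01 (S : Generators a br P h e f) : br (f 1) (br (e 0) (e 1)) = -e 0 := by
  simp [S.jacobi_of_even (S.f_mem 1), S.f_e, S.e_h, cartan]

theorem f2_e01 (S : Generators a br P h e f) : br (f 2) (br (e 0) (e 1)) = 0 := by
  simp [S.jacobi_of_even (S.f_mem 2), S.f_e]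

theorem f2_e02 (S : Generators a br P h e f) : br (f 2) (br (e 0) (e 2)) = -e 0 := by
  simp [S.jacobi_of_even (S.f_mem 2), S.f_e, S.e_h, cartan]

theorem f0_e012 (S : Generators a br P h e f) :
    br (f 0) (br (br (e 0) (e 1)) (e 2)) = br (e 1) (e 2) := by
  simp [S.jacobi_of_odd S.f_odd (y := br (e 0) (e 1)) (S.rootVec_mem 3), S.f0_e01, S.f_e]

theorem f1_e012 (S : Generators a br P h e f) :
    br (f 1) (br (br (e 0) (e 1)) (e 2)) = -br (e 0) (e 2) := by
  simp [S.jacobi_of_even (S.f_mem 1) (br (e 0) (e 1)), S.f1_e01, S.f_e]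

theorem f2_e012 (S : Generators a br P h e f) :
    br (f 2) (br (br (e 0) (e 1)) (e 2)) = -br (e 0) (e 1) := by
  have h2_e01 : br (h 2) (br (e 0) (e 1)) = -br (e 0) (e 1) := by
    simpa [posRootSum, rootVec, cartan] using S.h_rootVec 2 3
  have e01_h2 : br (br (e 0) (e 1)) (h 2) = br (e 0) (e 1) := by
    rw [← neg_eq_iff_eq_neg.2 (S.skew_of_even (S.h_mem 2) _), h2_e01, neg_neg]
  simp [S.jacobi_of_even (S.f_mem 2) (br (e 0) (e 1)), S.f2_e01, S.f_e, e01_h2]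

theorem f0_e0012 (S : Generators a br P h e f) :
    br (f 0) (br (e 0) (br (br (e 0) (e 1)) (e 2))) =
      (1 + a) • br (br (e 0) (e 1)) (e 2) - br (e 0) (br (e 1) (e 2)) := by
  have h0_e012 : br (h 0) (br (br (e 0) (e 1)) (e 2)) = (1 + a) • br (br (e 0) (e 1)) (e 2) := by
    simpa [posRootSum, rootVec, cartan] using S.h_rootVec 0 5
  rw [S.jacobi_of_odd S.f_odd S.e_odd, S.f_e, S.f0_e012]
  simp [h0_e012]

theorem f1_f0_e0012 (S : Generators a br P h e f) :
    br (f 1) (br (f 0) (br (e 0) (br (br (e 0) (e 1)) (e 2)))) =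
      -((1 + a) • br (e 0) (e 2)) := by
  have f1_e0_e12 : br (f 1) (br (e 0) (br (e 1) (e 2))) = 0 := by
    simp [S.jacobi_of_even (S.f_mem 1), S.f_e, S.h_e, cartan]
  rw [S.f0_e0012, map_sub, map_smul, S.f1_e012, f1_e0_e12, sub_zero, smul_neg]

theorem e02_e1 (S : Generators a br P h e f) (h_e12 : br (e 1) (e 2) = 0) :
    br (br (e 0) (e 2)) (e 1) = br (br (e 0) (e 1)) (e 2) := by
  rw [← neg_inj, ← S.skew_of_even (S.e_mem 1)]
  simp [S.jacobi_of_even (S.e_mem 1), h_e12, S.skew_of_even (S.e_mem 1) (e 0)]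

end Generators

end Generators

section Basis

/-- Indices of the weight basis: the `hᵢ`, then the positive roots, then their negatives. -/
abbrev Index : Type :=
  Fin 3 ⊕ Fin 7 ⊕ Fin 7

/-- The parities of the weight basis vectors. -/
def parity : Index → Bool :=
  Sum.elim (fun _ => false) (Sum.elim posRootParity posRootParity)

/-- The weights of the simple root vectors under `gradingElement`. The decimal digits of the weight
of a root are its coordinates in the simple roots, so distinct roots have distinct weights. -/
def simpleWeight : Fin 3 → ℤ :=
  ![1, 10, 100]

/-- The weights of the basis vectors under `gradingElement`. -/
def weight : Index → ℤ :=
  Sum.elim 0 (Sum.elim (posRootSum simpleWeight) (-posRootSum simpleWeight))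

theorem intCast_posRootSum {R : Type*} [CommRing R] (w : Fin 3 → ℤ) (k : Fin 7) :
    posRootSum (fun i => (w i : R)) k = (posRootSum w k : ℤ) := by
  fin_cases k <;> simp [posRootSum]

variable {K L : Type*} [Field K] [AddCommGroup L] [Module K L]

/-- The weight basis: the `hᵢ` and the root vectors obtained from the `eᵢ` and from the `fᵢ`. -/
def vec (br : L →ₗ[K] L →ₗ[K] L) (h e f : Fin 3 → L) : Index → L :=
  Sum.elim h (Sum.elim (rootVec br e) (rootVec br f))

/-- The Cartan element whose eigenvalue on `eᵢ` is `simpleWeight i`. -/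
noncomputable def gradingElement (a : K) (h : Fin 3 → L) : L :=
  ∑ i, Matrix.vecMul (fun i => (simpleWeight i : K)) (cartan a)⁻¹ i • h i

theorem gradingElement_neg (a : K) (h : Fin 3 → L) :
    gradingElement a (-h) = -gradingElement a h := by
  simp [gradingElement]

theorem det_cartan (a : K) : (cartan a).det = 2 * (1 + a) := by
  simp [cartan, Matrix.det_fin_three]
  ring

namespace Generators

variable {a : K} {br : L →ₗ[K] L →ₗ[K] L} {P : Bool → Submodule K L} {h e f : Fin 3 → L}

theorem vec_mem (S : Generators a br P h e f) (j : Index) : vec br h e f j ∈ P (parity j) := by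
  rcases j with i | k | k
  exacts [S.h_mem i, S.rootVec_mem k, S.flip.rootVec_mem k]

theorem gradingElement_mem (S : Generators a br P h e f) : gradingElement a h ∈ P false :=
  sum_mem fun i _ => Submodule.smul_mem _ _ (S.h_mem i)

theorem e_zero_ne_zero (S : Generators a br P h e f) (ha0 : a ≠ 0) (hne : h ≠ 0) : e 0 ≠ 0 := by
  intro he0
  have h0 : h 0 = 0 := by simpa [he0] using (S.e_f 0 0).symm
  have he1 : e 1 = 0 := by simpa [h0, cartan] using (S.h_e 0 1).symm
  have he2 : e 2 = 0 := by simpa [h0, cartan, ha0] using (S.h_e 0 2).symm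
  refine hne (funext fun i => ?_)
  have := S.e_f i i
  fin_cases i <;> simp_all

theorem e_ne_zero (S : Generators a br P h e f) (ha0 : a ≠ 0) (hne : h ≠ 0) (i : Fin 3) :
    e i ≠ 0 := by
  intro hei
  have hi : h i = 0 := by simpa [hei] using (S.e_f i i).symm
  have := S.h_e i 0
  refine S.e_zero_ne_zero ha0 hne ?_
  fin_cases i <;> simp_all [cartan]

theorem rootVec_ne_zero (S : Generators a br P h e f) (ha0 : a ≠ 0) (ha1 : 1 + a ≠ 0) (hne : h ≠ 0)
    (k : Fin 7) : rootVec br e k ≠ 0 := by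
  have he := S.e_ne_zero ha0 hne
  have e01 : br (e 0) (e 1) ≠ 0 := fun h0 => he 0 (by simpa [h0] using S.f1_e01)
  have e02 : br (e 0) (e 2) ≠ 0 := fun h0 => he 0 (by simpa [h0] using S.f2_e02)
  have e012 : br (br (e 0) (e 1)) (e 2) ≠ 0 := fun h0 => e02 (by simpa [h0] using S.f1_e012)
  have e0012 : br (e 0) (br (br (e 0) (e 1)) (e 2)) ≠ 0 := fun h0 =>
    e02 (by simpa [h0, ha1] using S.f1_f0_e0012)
  fin_cases k
  exacts [he 0, he 1, he 2, e01, e02, e012, e0012]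

variable [CharZero K]

theorem br_gradingElement_e (S : Generators a br P h e f) (ha1 : 1 + a ≠ 0) (i : Fin 3) :
    br (gradingElement a h) (e i) = (simpleWeight i : K) • e i := by
  have hdet : IsUnit (cartan a).det := by simpa [det_cartan] using ha1
  rw [gradingElement, S.br_sum_h_e, Matrix.vecMul_vecMul, Matrix.nonsing_inv_mul _ hdet,
    Matrix.vecMul_one]

theorem br_gradingElement_rootVec (S : Generators a br P h e f) (ha1 : 1 + a ≠ 0) (k : Fin 7) :
    br (gradingElement a h) (rootVec br e k) =
      ((posRootSum simpleWeight k : ℤ) : K) • rootVec br e k := by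
  rw [S.br_rootVec_of_eigenvectors S.gradingElement_mem (S.br_gradingElement_e ha1),
    intCast_posRootSum]

theorem br_gradingElement_vec (S : Generators a br P h e f) (ha1 : 1 + a ≠ 0) (j : Index) :
    br (gradingElement a h) (vec br h e f j) = (weight j : K) • vec br h e f j := by
  rcases j with i | k | k
  · simp [gradingElement, vec, weight, S.h_h]
  · exact S.br_gradingElement_rootVec ha1 k
  · have := S.flip.br_gradingElement_rootVec ha1 k
    rw [gradingElement_neg, map_neg, LinearMap.neg_apply] at this
    simp [vec, weight, ← this]

theorem linearIndependent_h (S : Generators a br P h e f) (ha0 : a ≠ 0) (ha1 : 1 + a ≠ 0)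
    (hne : h ≠ 0) : LinearIndependent K h := by
  rw [Fintype.linearIndependent_iff]
  intro c hc
  have vecMul_eq_zero : Matrix.vecMul c (cartan a) = 0 := by
    funext j
    have := S.br_sum_h_e c j
    rw [hc, map_zero, LinearMap.zero_apply, eq_comm, smul_eq_zero] at this
    exact this.resolve_right (S.e_ne_zero ha0 hne j)
  exact congr_fun (Matrix.eq_zero_of_vecMul_eq_zero (by simpa [det_cartan] using ha1)
    vecMul_eq_zero)

theorem linearIndependent_vec (S : Generators a br P h e f) (ha0 : a ≠ 0) (ha1 : 1 + a ≠ 0)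
    (hne : h ≠ 0) : LinearIndependent K (vec br h e f) := by
  have weight_injective : Function.Injective fun j => weight (Sum.inr j) := by decide
  have weight_ne_zero : ∀ j, weight (Sum.inr j) ≠ 0 := by decide
  refine linearIndependent_sum_of_eigenvectors (T := br (gradingElement a h))
    (μ := fun j => (weight (Sum.inr j) : K)) (S.linearIndependent_h ha0 ha1 hne) (fun i => ?_)
    (fun j => S.br_gradingElement_vec ha1 (Sum.inr j)) ?_
    (Int.cast_injective.comp weight_injective) (fun j => Int.cast_ne_zero.2 (weight_ne_zero j))
  · simpa [vec, weight] using S.br_gradingElement_vec ha1 (Sum.inl i)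
  · rintro (k | k)
    exacts [S.rootVec_ne_zero ha0 ha1 hne k, S.flip.rootVec_ne_zero ha0 ha1 (neg_ne_zero.2 hne) k]

/-- The weight basis as a `Module.Basis`. -/
noncomputable def basis (S : Generators a br P h e f) (ha0 : a ≠ 0) (ha1 : 1 + a ≠ 0) (hne : h ≠ 0)
    (hdim : Module.finrank K L = 17) : Module.Basis Index K L :=
  basisOfLinearIndependentOfCardEqFinrank (S.linearIndependent_vec ha0 ha1 hne) (by simp [hdim])

theorem coe_basis (S : Generators a br P h e f) (ha0 : a ≠ 0) (ha1 : 1 + a ≠ 0) (hne : h ≠ 0)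
    (hdim : Module.finrank K L = 17) : ⇑(S.basis ha0 ha1 hne hdim) = vec br h e f :=
  coe_basisOfLinearIndependentOfCardEqFinrank _ _

theorem br_vec_eq_zero (S : Generators a br P h e f) (ha1 : 1 + a ≠ 0)
    (hspan : Submodule.span K (Set.range (vec br h e f)) = ⊤) {j k : Index}
    (hjk : ∀ l, weight l ≠ weight j + weight k) :
    br (vec br h e f j) (vec br h e f k) = 0 := by
  refine eq_zero_of_eigenvectors_span (S.br_gradingElement_vec ha1) hspan
    (c := ((weight j + weight k : ℤ) : K)) (fun l => Int.cast_injective.ne (hjk l)) ?_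
  rw [Int.cast_add]
  exact S.br_smul_of_eigenvectors S.gradingElement_mem (S.br_gradingElement_vec ha1 j)
    (S.br_gradingElement_vec ha1 k)

theorem e1_e2 (S : Generators a br P h e f) (ha1 : 1 + a ≠ 0)
    (hspan : Submodule.span K (Set.range (vec br h e f)) = ⊤) : br (e 1) (e 2) = 0 :=
  S.br_vec_eq_zero ha1 hspan (j := .inr (.inl 1)) (k := .inr (.inl 2)) (by decide)

theorem f1_f2 (S : Generators a br P h e f) (ha1 : 1 + a ≠ 0)
    (hspan : Submodule.span K (Set.range (vec br h e f)) = ⊤) : br (f 1) (f 2) = 0 :=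
  S.br_vec_eq_zero ha1 hspan (j := .inr (.inr 1)) (k := .inr (.inr 2)) (by decide)

end Generators

end Basis

section Form

/-- The index of the opposite weight. -/
def opposite : Index → Index :=
  Sum.map id Sum.swap

/-- The signs relating the weight basis of `-h, f, twist e` to that of `h, e, f`. -/
def flipSign (R : Type*) [Ring R] : Index → R :=
  Sum.elim (fun _ => -1) (Sum.elim (fun _ => 1) fun k => if posRootParity k then -1 else 1)

variable {K L : Type*} [Field K] [AddCommGroup L] [Module K L]

/-- The values `(eᵢ, fᵢ)` of the form. The Cartan matrix becomes symmetric when its columns are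
multiplied by them. -/
def symmetrizer (a : K) : Fin 3 → K :=
  ![1, -1, -(1 / a)]

/-- The values of the form on the pairs of opposite root vectors, extending `symmetrizer` from the
simple roots to all positive roots. -/
def rootPairing (a : K) : Fin 7 → K :=
  ![1, -1, -(1 / a), -1, -1, 1, -(1 + a)]

/-- The Gram matrix of the invariant form in the weight basis. -/
def gram (a : K) : Matrix Index Index K :=
  .fromBlocks (cartan a * .diagonal (symmetrizer a)) 0 0
    (.fromBlocks 0 (.diagonal (rootPairing a))
      (.diagonal fun k => (if posRootParity k then -1 else 1) * rootPairing a k) 0)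

/-- `B` is the bilinear form with Gram matrix `gram a` in the weight basis. -/
def IsStandardForm (a : K) (br : L →ₗ[K] L →ₗ[K] L) (h e f : Fin 3 → L) (B : L →ₗ[K] L →ₗ[K] K) :
    Prop :=
  ∀ j k, B (vec br h e f j) (vec br h e f k) = gram a j k

theorem cartan_mul_symmetrizer_comm {a : K} (ha0 : a ≠ 0) (i j : Fin 3) :
    cartan a i j * symmetrizer a j = cartan a j i * symmetrizer a i := by
  fin_cases i <;> fin_cases j <;> simp [cartan, symmetrizer, ha0]

theorem gram_supersymmetric {a : K} (ha0 : a ≠ 0) (j k : Index) :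
    gram a j k = (if parity j && parity k then (-1 : K) else 1) * gram a k j := by
  rcases j with i | m | m <;> rcases k with j | n | n
  case inl.inl => simpa [gram, parity] using cartan_mul_symmetrizer_comm ha0 i j
  case inr.inl.inr.inr | inr.inr.inr.inl =>
    rcases eq_or_ne m n with rfl | hmn
    · cases hm : posRootParity m <;> simp [gram, parity, hm]
    · simp [gram, hmn, hmn.symm]
  all_goals simp [gram]

theorem gram_opposite (a : K) (j k : Index) :
    flipSign K j * flipSign K k * gram a (opposite j) (opposite k) = gram a j k := by
  rcases j with i | m | m <;> rcases k with j | n | n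
  case inr.inl.inr.inr | inr.inr.inr.inl =>
    rcases eq_or_ne m n with rfl | hmn
    · cases hm : posRootParity m <;> simp [gram, flipSign, opposite, hm]
    · simp [gram, opposite, hmn]
  all_goals simp [gram, flipSign, opposite]

theorem gram_eq_zero (a : K) {j k : Index} (hjk : weight j + weight k ≠ 0) : gram a j k = 0 := by
  rcases j with i | m | m <;> rcases k with j | n | n
  case inl.inl => exact absurd rfl hjk
  case inr.inl.inr.inr | inr.inr.inr.inl =>
    have hmn : m ≠ n := by
      rintro rfl
      simp [weight] at hjk
    simp [gram, hmn]
  all_goals simp [gram]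

theorem gram_mem {a : K} {F : Subfield K} (ha : a ∈ F) (j k : Index) : gram a j k ∈ F := by
  have cartan_mem i j : cartan a i j ∈ F := by
    fin_cases i <;> fin_cases j <;> simp [cartan, ha, ofNat_mem]
  have symmetrizer_mem i : symmetrizer a i ∈ F := by
    fin_cases i <;> simp [symmetrizer, ha]
  have rootPairing_mem i : rootPairing a i ∈ F := by
    fin_cases i <;> simp [rootPairing, ha, add_mem, -neg_add_rev]
  rcases j with i | m | m <;> rcases k with j | n | n
  case inl.inl => simpa [gram] using mul_mem (cartan_mem i j) (symmetrizer_mem j)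
  case inr.inl.inr.inr | inr.inr.inr.inl =>
    rcases eq_or_ne m n with rfl | hmn
    · cases hm : posRootParity m <;> simp [gram, hm, rootPairing_mem]
    · simp [gram, hmn]
  all_goals simp [gram]

theorem vec_flip (br : L →ₗ[K] L →ₗ[K] L) (h e f : Fin 3 → L) (j : Index) :
    vec br (-h) f (twist e) j = flipSign K j • vec br h e f (opposite j) := by
  rcases j with i | k | k <;> simp [vec, flipSign, opposite, rootVec_twist]

theorem span_vec_flip {br : L →ₗ[K] L →ₗ[K] L} {h e f : Fin 3 → L}
    (hspan : Submodule.span K (Set.range (vec br h e f)) = ⊤) :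
    Submodule.span K (Set.range (vec br (-h) f (twist e))) = ⊤ := by
  rw [eq_top_iff, ← hspan, Submodule.span_le]
  rintro _ ⟨j, rfl⟩
  have : vec br h e f j = flipSign K (opposite j) • vec br (-h) f (twist e) (opposite j) := by
    rw [vec_flip, smul_smul]
    rcases j with i | k | k
    · simp [flipSign, opposite]
    · cases hk : posRootParity k <;> simp [flipSign, opposite, hk]
    · simp [flipSign, opposite]
  rw [this]
  exact Submodule.smul_mem _ _ (Submodule.subset_span ⟨_, rfl⟩)

namespace IsStandardForm

variable {a : K} {br : L →ₗ[K] L →ₗ[K] L} {h e f : Fin 3 → L} {B : L →ₗ[K] L →ₗ[K] K}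

theorem flip (hB : IsStandardForm a br h e f B) : IsStandardForm a br (-h) f (twist e) B := by
  intro j k
  simp only [vec_flip, map_smul, LinearMap.smul_apply, hB _ _, smul_eq_mul, ← gram_opposite a j k]
  ring

theorem apply_rootVec (hB : IsStandardForm a br h e f B) (k : Fin 7) :
    B (rootVec br e k) (rootVec br f k) = rootPairing a k :=
  (hB (.inr (.inl k)) (.inr (.inr k))).trans (by simp [gram])

theorem apply_h_h (hB : IsStandardForm a br h e f B) (i j : Fin 3) :
    B (h i) (h j) = cartan a i j * symmetrizer a j :=
  (hB (.inl i) (.inl j)).trans (by simp [gram])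

theorem apply_h_e (hB : IsStandardForm a br h e f B) (i j : Fin 3) : B (h i) (e j) = 0 := by
  simpa [vec, rootVec_simple, gram] using hB (.inl i) (.inr (.inl (simple j)))

theorem apply_h_f (hB : IsStandardForm a br h e f B) (i j : Fin 3) : B (h i) (f j) = 0 := by
  simpa [vec, rootVec_simple, gram] using hB (.inl i) (.inr (.inr (simple j)))

theorem apply_e_e (hB : IsStandardForm a br h e f B) (i j : Fin 3) : B (e i) (e j) = 0 := by
  simpa [vec, rootVec_simple, gram] using hB (.inr (.inl (simple i))) (.inr (.inl (simple j)))

theorem apply_f_f (hB : IsStandardForm a br h e f B) (i j : Fin 3) : B (f i) (f j) = 0 := by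
  simpa [vec, rootVec_simple, gram] using hB (.inr (.inr (simple i))) (.inr (.inr (simple j)))

theorem apply_e_f (hB : IsStandardForm a br h e f B) (i j : Fin 3) :
    B (e i) (f j) = if i = j then symmetrizer a i else 0 := by
  have := hB (.inr (.inl (simple i))) (.inr (.inr (simple j)))
  rw [vec, Sum.elim_inr, Sum.elim_inl, Sum.elim_inr, Sum.elim_inr, rootVec_simple,
    rootVec_simple] at this
  rw [this]
  fin_cases i <;> fin_cases j <;> simp [gram, simple, rootPairing, symmetrizer]

end IsStandardForm

end Form

section Invariance

variable {K L : Type*} [Field K] [AddCommGroup L] [Module K L]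
  {a : K} {br : L →ₗ[K] L →ₗ[K] L} {P : Bool → Submodule K L} {h e f : Fin 3 → L}
  {B : L →ₗ[K] L →ₗ[K] K}

theorem simpleWeight_add_posRootSum_eq_iff :
    ∀ (i : Fin 3) (m n : Fin 7),
      simpleWeight i + posRootSum simpleWeight m = posRootSum simpleWeight n ↔ (i, m, n) ∈
        [(0, 1, 3), (0, 2, 4), (0, 5, 6), (1, 0, 3), (1, 4, 5), (2, 0, 4), (2, 3, 5)] := by
  decide

theorem IsStandardForm.br_rootVec_apply_of_smul (hB : IsStandardForm a br h e f B)
    {i : Fin 3} {m n : Fin 7} {r s : K} (hr : br (rootVec br e m) (e i) = r • rootVec br e n)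
    (hs : br (e i) (rootVec br f n) = s • rootVec br f m)
    (hrs : r * rootPairing a n = s * rootPairing a m) :
    B (br (rootVec br e m) (e i)) (rootVec br f n) =
      B (rootVec br e m) (br (e i) (rootVec br f n)) := by
  rw [hr, hs, map_smul, map_smul, LinearMap.smul_apply, hB.apply_rootVec, hB.apply_rootVec,
    smul_eq_mul, smul_eq_mul, hrs]

namespace Generators

theorem isSupersymmetric (S : Generators a br P h e f) (ha0 : a ≠ 0)
    (hspan : Submodule.span K (Set.range (vec br h e f)) = ⊤) (hB : IsStandardForm a br h e f B) :
    IsSupersymmetric P B :=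
  isSupersymmetric_of_span S.isCompl S.vec_mem hspan fun j k => by
    rw [hB, hB, gram_supersymmetric ha0]

theorem apply_even_odd (S : Generators a br P h e f)
    (hspan : Submodule.span K (Set.range (vec br h e f)) = ⊤) (hB : IsStandardForm a br h e f B)
    {x y : L} (hx : x ∈ P false) (hy : y ∈ P true) : B x y = 0 := by
  have weight_add_ne_zero : ∀ j k, parity j = false → parity k = true →
      weight j + weight k ≠ 0 := by decide
  refine apply_eq_zero_of_parity S.isCompl S.vec_mem hspan (fun j k hj hk => ?_) hx hy
  rw [hB, gram_eq_zero a (weight_add_ne_zero j k hj hk)]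

theorem isSkewAdjoint_gradingElement [CharZero K] (S : Generators a br P h e f) (ha1 : 1 + a ≠ 0)
    (hspan : Submodule.span K (Set.range (vec br h e f)) = ⊤) (hB : IsStandardForm a br h e f B) :
    B.IsSkewAdjoint (br (gradingElement a h)) := by
  refine (LinearMap.isAdjointPair_iff_comp_eq_compl₂ (g := -br (gradingElement a h))).2 ?_
  refine LinearMap.ext_on_range hspan fun j => LinearMap.ext_on_range hspan fun k => ?_
  have weight_mul_gram : (weight j + weight k : K) * gram a j k = 0 := by
    rcases eq_or_ne (weight j + weight k) 0 with hjk | hjk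
    · rw [← Int.cast_add, hjk, Int.cast_zero, zero_mul]
    · rw [gram_eq_zero a hjk, mul_zero]
  simp only [LinearMap.comp_apply, LinearMap.compl₂_apply, S.br_gradingElement_vec ha1, map_smul,
    LinearMap.smul_apply, LinearMap.neg_apply, map_neg, hB _ _, smul_eq_mul]
  linear_combination weight_mul_gram

theorem br_apply_eq_of_weight_ne_zero [CharZero K] (S : Generators a br P h e f) (ha1 : 1 + a ≠ 0)
    (hspan : Submodule.span K (Set.range (vec br h e f)) = ⊤) (hB : IsStandardForm a br h e f B)
    {i : Fin 3} {j k : Index} (hjk : weight j + simpleWeight i + weight k ≠ 0) :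
    B (br (vec br h e f j) (e i)) (vec br h e f k) =
      B (vec br h e f j) (br (e i) (vec br h e f k)) := by
  have skew := S.isSkewAdjoint_gradingElement ha1 hspan hB
  have hd := S.gradingElement_mem
  have hj := S.br_gradingElement_vec ha1 j
  have hk := S.br_gradingElement_vec ha1 k
  have hi := S.br_gradingElement_e ha1 i
  have total_ne_zero : (weight j + simpleWeight i + weight k : K) ≠ 0 := mod_cast hjk
  rw [apply_eq_zero_of_eigenvectors skew total_ne_zero (S.br_smul_of_eigenvectors hd hj hi) hk,
    apply_eq_zero_of_eigenvectors skew (by rwa [← add_assoc]) hj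
      (S.br_smul_of_eigenvectors hd hi hk)]

theorem br_h_e_apply_f (S : Generators a br P h e f) (hB : IsStandardForm a br h e f B)
    (i j : Fin 3) : B (br (h j) (e i)) (f i) = B (h j) (br (e i) (f i)) := by
  rw [S.h_e, S.e_f, if_pos rfl, map_smul, LinearMap.smul_apply, hB.apply_e_f, if_pos rfl,
    hB.apply_h_h, smul_eq_mul]

theorem br_rootVec_e_apply_rootVec (S : Generators a br P h e f) (ha0 : a ≠ 0)
    (h_e12 : br (e 1) (e 2) = 0) (h_f12 : br (f 1) (f 2) = 0)
    (hB : IsStandardForm a br h e f B) {i : Fin 3} {m n : Fin 7}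
    (himn : simpleWeight i + posRootSum simpleWeight m = posRootSum simpleWeight n) :
    B (br (rootVec br e m) (e i)) (rootVec br f n) =
      B (rootVec br e m) (br (e i) (rootVec br f n)) := by
  have edges := (simpleWeight_add_posRootSum_eq_iff i m n).1 himn
  simp only [List.mem_cons, Prod.mk.injEq, List.not_mem_nil, or_false] at edges
  rcases edges with ⟨rfl, rfl, rfl⟩ | ⟨rfl, rfl, rfl⟩ | ⟨rfl, rfl, rfl⟩ | ⟨rfl, rfl, rfl⟩ |
    ⟨rfl, rfl, rfl⟩ | ⟨rfl, rfl, rfl⟩ | ⟨rfl, rfl, rfl⟩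
  · exact hB.br_rootVec_apply_of_smul (r := -1) (s := -1)
      (by simpa [rootVec] using S.skew_of_even (S.e_mem 1) (e 0))
      (by simpa [rootVec, twist, neg_eq_iff_eq_neg] using S.flip.f0_e01)
      (by simp [rootPairing])
  · exact hB.br_rootVec_apply_of_smul (r := -1) (s := -a)
      (by simpa [rootVec] using S.skew_of_even (S.e_mem 2) (e 0))
      (by simpa [rootVec, twist, neg_eq_iff_eq_neg] using S.flip.f0_e02)
      (by simp [rootPairing, ha0])
  · exact hB.br_rootVec_apply_of_smul (r := 1) (s := -(1 + a))
      (by simpa [rootVec] using S.skew_of_odd (S.rootVec_mem 5) S.e_odd)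
      (by simpa [rootVec, twist, neg_eq_iff_eq_neg, h_f12, -neg_add_rev] using S.flip.f0_e0012)
      (by simp [rootPairing])
  · exact hB.br_rootVec_apply_of_smul (r := 1) (s := -1) (by simp [rootVec])
      (by simpa [rootVec, twist] using S.flip.f1_e01)
      (by simp [rootPairing])
  · exact hB.br_rootVec_apply_of_smul (r := 1) (s := -1) (by simpa [rootVec] using S.e02_e1 h_e12)
      (by simpa [rootVec, twist] using S.flip.f1_e012)
      (by simp [rootPairing])
  · exact hB.br_rootVec_apply_of_smul (r := 1) (s := -1) (by simp [rootVec])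
      (by simpa [rootVec, twist] using S.flip.f2_e02)
      (by simp [rootPairing])
  · exact hB.br_rootVec_apply_of_smul (r := 1) (s := -1) (by simp [rootVec])
      (by simpa [rootVec, twist] using S.flip.f2_e012)
      (by simp [rootPairing])

theorem br_vec_e_apply_root_f [CharZero K] (S : Generators a br P h e f) (ha0 : a ≠ 0)
    (ha1 : 1 + a ≠ 0) (hspan : Submodule.span K (Set.range (vec br h e f)) = ⊤)
    (hB : IsStandardForm a br h e f B) (i : Fin 3) (j : Index) (n : Fin 7) :
    B (br (vec br h e f j) (e i)) (rootVec br f n) =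
      B (vec br h e f j) (br (e i) (rootVec br f n)) := by
  by_cases total : weight j + simpleWeight i + weight (.inr (.inr n)) = 0
  swap
  · exact S.br_apply_eq_of_weight_ne_zero ha1 hspan hB total
  rcases j with m | m | m
  · have simple_of_weight : ∀ i n, simpleWeight i - posRootSum simpleWeight n = 0 →
        n = simple i := by decide
    obtain rfl := simple_of_weight i n (by simpa [weight, sub_eq_add_neg] using total)
    rw [rootVec_simple]
    exact S.br_h_e_apply_f hB i m
  · refine S.br_rootVec_e_apply_rootVec ha0 (S.e1_e2 ha1 hspan) (S.f1_f2 ha1 hspan) hB ?_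
    simp only [weight, Sum.elim_inr, Sum.elim_inl, Pi.neg_apply] at total
    linear_combination total
  · have no_neg_neg : ∀ m i n, -posRootSum simpleWeight m + simpleWeight i +
        -posRootSum simpleWeight n ≠ 0 := by decide
    exact absurd total (no_neg_neg m i n)

theorem e_mem_invariantSubmodule [CharZero K] (S : Generators a br P h e f) (ha0 : a ≠ 0)
    (ha1 : 1 + a ≠ 0) (hspan : Submodule.span K (Set.range (vec br h e f)) = ⊤)
    (hB : IsStandardForm a br h e f B) (i : Fin 3) : e i ∈ invariantSubmodule br B := by
  refine mem_invariantSubmodule_of_span hspan fun j k => ?_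
  have supersymm := S.isSupersymmetric ha0 hspan hB
  have neg_right := S.br_vec_e_apply_root_f ha0 ha1 hspan hB i
  have neg_left n k := S.toIsLieSuperalgebra.invariant_reverse supersymm (S.vec_mem k) (S.e_mem i)
    (S.vec_mem (.inr (.inr n))) (neg_right k n)
  have weight_nonneg : ∀ l, 0 ≤ weight l ∨ ∃ n, l = .inr (.inr n) := by decide
  have simpleWeight_pos : ∀ i, 0 < simpleWeight i := by decide
  rcases weight_nonneg j with hj | ⟨n, rfl⟩
  · rcases weight_nonneg k with hk | ⟨n, rfl⟩
    · have := simpleWeight_pos i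
      exact S.br_apply_eq_of_weight_ne_zero ha1 hspan hB (by omega)
    · exact neg_right j n
  · exact neg_left n k

theorem invariantSubmodule_eq_top [CharZero K] (S : Generators a br P h e f) (ha0 : a ≠ 0)
    (ha1 : 1 + a ≠ 0) (hspan : Submodule.span K (Set.range (vec br h e f)) = ⊤)
    (hB : IsStandardForm a br h e f B) : invariantSubmodule br B = ⊤ := by
  have he := S.e_mem_invariantSubmodule ha0 ha1 hspan hB
  have hf := S.flip.e_mem_invariantSubmodule ha0 ha1 (span_vec_flip hspan) hB.flip
  rw [eq_top_iff, ← hspan, Submodule.span_le]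
  rintro _ ⟨i | k | k, rfl⟩
  · have := S.br_mem_invariantSubmodule (S.e_mem i) (S.f_mem i) (he i) (hf i)
    rwa [S.e_f, if_pos rfl] at this
  · exact S.rootVec_mem_invariantSubmodule he k
  · exact S.flip.rootVec_mem_invariantSubmodule hf k

end Generators

end Invariance

section ChevalleyBasis

theorem chevalleyBasisD21a_subset_span {L : Type*} [AddCommGroup L] [Module ℂ L] {a : ℚ}
    {br : L →ₗ[ℂ] L →ₗ[ℂ] L} {P : Bool → Submodule ℂ L} {h e f : Fin 3 → L}
    (S : Generators (a : ℂ) br P h e f) (F : Subfield ℂ) :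
    chevalleyBasisD21a br a h e f ⊆ Submodule.span F (Set.range (vec br h e f)) := by
  have ha : (a : ℂ) ∈ F := SubfieldClass.ratCast_mem F a
  have vec_mem j : vec br h e f j ∈ Submodule.span F (Set.range (vec br h e f)) :=
    Submodule.subset_span ⟨j, rfl⟩
  have smul_mem {c : ℂ} (hc : c ∈ F) {x : L}
      (hx : x ∈ Submodule.span F (Set.range (vec br h e f))) :
      c • x ∈ Submodule.span F (Set.range (vec br h e f)) :=
    Submodule.smul_mem _ (⟨c, hc⟩ : F) hx
  have h_mem i := vec_mem (.inl i)
  have e_mem k := vec_mem (.inr (.inl k))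
  have f_mem k := vec_mem (.inr (.inr k))
  have f10 : br (f 1) (f 0) = -br (f 0) (f 1) := S.skew_of_even (S.f_mem 1) (f 0)
  have f20 : br (f 2) (f 0) = -br (f 0) (f 2) := S.skew_of_even (S.f_mem 2) (f 0)
  have f210 : br (f 2) (br (f 1) (f 0)) = br (br (f 0) (f 1)) (f 2) := by
    rw [f10, map_neg, S.skew_of_even (S.f_mem 2), neg_neg]
  have f2100 : br (br (br (f 0) (f 1)) (f 2)) (f 0) = br (f 0) (br (br (f 0) (f 1)) (f 2)) :=
    S.skew_of_odd (S.flip.rootVec_mem 5) S.f_odd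
  have c_mem : 1 / (1 + (a : ℂ)) ∈ F := div_mem (one_mem F) (add_mem (one_mem F) ha)
  have H2_mem := smul_mem c_mem (sub_mem (sub_mem (smul_mem (ofNat_mem F 2) (h_mem 0)) (h_mem 1))
    (smul_mem ha (h_mem 2)))
  rintro x (rfl | rfl | rfl | rfl | rfl | rfl | rfl | rfl | rfl | rfl | rfl | rfl | rfl | rfl |
    rfl | rfl | rfl)
  exacts [h_mem 0, H2_mem, h_mem 2, e_mem 0, e_mem 1, e_mem 2, f_mem 0, f_mem 1, f_mem 2,
    e_mem 3, e_mem 4, e_mem 5, smul_mem c_mem (e_mem 6), f10 ▸ neg_mem (f_mem 3),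
    f20 ▸ neg_mem (f_mem 4), f210 ▸ f_mem 5, f210 ▸ f2100 ▸ neg_mem (smul_mem c_mem (f_mem 6))]

end ChevalleyBasis

section Existence

variable {K L : Type*} [Field K] [AddCommGroup L] [Module K L]
  {a : K} {br : L →ₗ[K] L →ₗ[K] L} {P : Bool → Submodule K L} {h e f : Fin 3 → L}

theorem Generators.e_eq_zero (S : Generators a br P h e f) (ha0 : a ≠ 0) (h_zero : h = 0)
    (i : Fin 3) : e i = 0 := by
  subst h_zero
  fin_cases i
  · simpa [cartan] using S.h_e 1 0
  · simpa [cartan] using (S.h_e 0 1).symm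
  · simpa [cartan, ha0] using (S.h_e 0 2).symm

theorem Generators.h_ne_zero [Nontrivial L] (S : Generators a br P h e f) (ha0 : a ≠ 0)
    (hgen : ∀ W : Submodule K L, (∀ i, h i ∈ W) → (∀ i, e i ∈ W) → (∀ i, f i ∈ W) →
      (∀ x ∈ W, ∀ y ∈ W, br x y ∈ W) → W = ⊤) : h ≠ 0 := by
  intro h_zero
  have he := S.e_eq_zero ha0 h_zero
  have hf := S.flip.e_eq_zero ha0 (neg_eq_zero.2 h_zero)
  exact bot_ne_top (hgen ⊥ (by simp [h_zero]) (by simp [he]) (by simp [hf]) (by simp))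

end Existence

end D21

open D21

theorem statement18_general {K L : Type*} [Field K] [CharZero K] [AddCommGroup L] [Module K L]
    {a : K} (ha0 : a ≠ 0) (ha1 : 1 + a ≠ 0) (hdim : Module.finrank K L = 17)
    {br : L →ₗ[K] L →ₗ[K] L} {P : Bool → Submodule K L} {h e f : Fin 3 → L}
    (S : Generators a br P h e f) (hne : h ≠ 0) :
    ∃ B : L →ₗ[K] L →ₗ[K] K,
      (∀ x y z, B (br x y) z = B x (br y z)) ∧ IsSupersymmetric P B ∧
      (∀ x ∈ P false, ∀ y ∈ P true, B x y = 0) ∧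
      (∀ i j, B (h i) (h j) = cartan a i j * symmetrizer a j) ∧
      (∀ i j, B (h i) (e j) = 0) ∧ (∀ i j, B (h i) (f j) = 0) ∧
      (∀ i j, B (e i) (e j) = 0) ∧ (∀ i j, B (f i) (f j) = 0) ∧
      (∀ i j, B (e i) (f j) = if i = j then symmetrizer a i else 0) ∧
      ∀ F : Subfield K, a ∈ F → ∀ x ∈ Submodule.span F (Set.range (vec br h e f)),
        ∀ y ∈ Submodule.span F (Set.range (vec br h e f)), B x y ∈ F := by
  let b := S.basis ha0 ha1 hne hdim
  have hb : ⇑b = vec br h e f := S.coe_basis ha0 ha1 hne hdim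
  have hspan : Submodule.span K (Set.range (vec br h e f)) = ⊤ := hb ▸ b.span_eq
  let B := Matrix.toLinearMap₂ b b (gram a)
  have hB : IsStandardForm a br h e f B := fun j k => by
    rw [← hb, Matrix.toLinearMap₂_apply_basis]
  have invariant y : y ∈ invariantSubmodule br B :=
    S.invariantSubmodule_eq_top ha0 ha1 hspan hB ▸ Submodule.mem_top
  refine ⟨B, fun x y z => invariant y x z, S.isSupersymmetric ha0 hspan hB,
    fun x hx y hy => S.apply_even_odd hspan hB hx hy, hB.apply_h_h, hB.apply_h_e, hB.apply_h_f,
    hB.apply_e_e, hB.apply_f_f, hB.apply_e_f, fun F ha x hx y hy =>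
      apply_mem_of_mem_span F ?_ hx hy⟩
  rintro _ ⟨j, rfl⟩ _ ⟨k, rfl⟩
  rw [hB]
  exact gram_mem ha j k

/-- Let `g = D(2,1;a)` with `a ∈ ℚ \ {0, −1}`, with Chevalley-type
generators `hᵢ, eᵢ, fᵢ` (`i = 1,2,3`) subject to `[hᵢ,hⱼ] = 0`, `[e₁,e₁] = [f₁,f₁] = 0`,
`[hᵢ,eⱼ] = aᵢⱼ eⱼ`, `[hᵢ,fⱼ] = −aᵢⱼ fⱼ`, `[eᵢ,fⱼ] = δᵢⱼ hᵢ`, where the Cartan matrix has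
rows `(0,1,a), (−1,2,0), (−1,0,2)`.  Then the bilinear form determined by
`(e₁,f₁) = 1`, `(e₂,f₂) = −1`, `(e₃,f₃) = −1/a`, `(h₁,h₂) = −1`, `(h₁,h₃) = −1`,
`(h₂,h₂) = −2`, `(h₃,h₃) = −2/a` (all other pairings of generators zero), extended by
invariance, is an even supersymmetric invariant bilinear form on `g` taking values in `ℚ`
on the Chevalley basis. -/
theorem statement18 (a : ℚ) (ha0 : a ≠ 0) (ham1 : a ≠ -1)
    {L : Type*} [AddCommGroup L] [Module ℂ L] [FiniteDimensional ℂ L]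
    (hdim : Module.finrank ℂ L = 17)
    (br : L →ₗ[ℂ] L →ₗ[ℂ] L)       -- the Lie superbracket
    (P : Bool → Submodule ℂ L)      -- parity decomposition
    (hPcompl : IsCompl (P false) (P true))
    (hbrP : ∀ (p q : Bool), ∀ x ∈ P p, ∀ y ∈ P q, br x y ∈ P (xor p q))
    (hskew : ∀ (p q : Bool), ∀ x ∈ P p, ∀ y ∈ P q,
      br x y = (if p && q then (1 : ℂ) else -1) • br y x)
    (hjac : ∀ (p q : Bool), ∀ x ∈ P p, ∀ y ∈ P q, ∀ z : L,
      br x (br y z) = br (br x y) z + (if p && q then (-1 : ℂ) else 1) • br y (br x z))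
    -- the generators (index 0 here is index 1 of the paper, etc.)
    (h e f : Fin 3 → L)
    -- parities: e₁, f₁ are odd, all other generators even
    (hhP : ∀ i, h i ∈ P false)
    (heP0 : e 0 ∈ P true) (hfP0 : f 0 ∈ P true)
    (heP : ∀ i, i ≠ 0 → e i ∈ P false) (hfP : ∀ i, i ≠ 0 → f i ∈ P false)
    -- the defining relations, with Cartan matrix (0,1,a; −1,2,0; −1,0,2)
    (hhh : ∀ i j, br (h i) (h j) = 0)
    (hee : br (e 0) (e 0) = 0) (hff : br (f 0) (f 0) = 0)
    (hhe : ∀ i j, br (h i) (e j) =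
      (!![(0 : ℂ), 1, (a : ℂ); -1, 2, 0; -1, 0, 2] i j) • e j)
    (hhf : ∀ i j, br (h i) (f j) =
      -((!![(0 : ℂ), 1, (a : ℂ); -1, 2, 0; -1, 0, 2] i j) • f j))
    (hef : ∀ i j, br (e i) (f j) = if i = j then h i else 0)
    -- g is generated by the hᵢ, eᵢ, fᵢ as a Lie superalgebra
    (hgen : ∀ W : Submodule ℂ L, (∀ i, h i ∈ W) → (∀ i, e i ∈ W) → (∀ i, f i ∈ W) →
      (∀ x ∈ W, ∀ y ∈ W, br x y ∈ W) → W = ⊤) :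
    ∃ B : L →ₗ[ℂ] L →ₗ[ℂ] ℂ,
      -- B is invariant ...
      (∀ x y z : L, B (br x y) z = B x (br y z)) ∧
      -- ... supersymmetric ...
      (∀ (p q : Bool), ∀ x ∈ P p, ∀ y ∈ P q,
        B x y = (if p && q then (-1 : ℂ) else 1) * B y x) ∧
      -- ... even ...
      (∀ x ∈ P false, ∀ y ∈ P true, B x y = 0) ∧
      -- ... takes the prescribed values on the generators ...
      B (e 0) (f 0) = 1 ∧ B (e 1) (f 1) = -1 ∧ B (e 2) (f 2) = -(1 / (a : ℂ)) ∧
      B (h 0) (h 1) = -1 ∧ B (h 0) (h 2) = -1 ∧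
      B (h 1) (h 1) = -2 ∧ B (h 2) (h 2) = -(2 / (a : ℂ)) ∧
      -- ... all remaining pairings of generators vanish ...
      B (h 0) (h 0) = 0 ∧ B (h 1) (h 2) = 0 ∧
      (∀ i j, B (h i) (e j) = 0) ∧ (∀ i j, B (h i) (f j) = 0) ∧
      (∀ i j, B (e i) (e j) = 0) ∧ (∀ i j, B (f i) (f j) = 0) ∧
      (∀ i j, i ≠ j → B (e i) (f j) = 0) ∧
      -- ... and B takes rational values on the Chevalley basis
      (∀ x ∈ chevalleyBasisD21a br a h e f, ∀ y ∈ chevalleyBasisD21a br a h e f,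
        ∃ q : ℚ, B x y = (q : ℂ)) := by
  have S : Generators (a : ℂ) br P h e f :=
    ⟨⟨hPcompl, hbrP, hskew, hjac⟩, hhP, heP0, hfP0, heP, hfP, hhh, hhe, hhf, hef⟩
  have : Nontrivial L := Module.nontrivial_of_finrank_pos (R := ℂ) (by omega)
  have ha0' : (a : ℂ) ≠ 0 := by exact_mod_cast ha0
  have ha1 : 1 + (a : ℂ) ≠ 0 := by exact_mod_cast fun h1 => ham1 (by linear_combination h1)
  obtain ⟨B, invariant, supersymmetric, even, h_h, h_e, h_f, e_e, f_f, e_f, mem_subfield⟩ :=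
    statement18_general ha0' ha1 hdim S (S.h_ne_zero ha0' hgen)
  have subset_span := chevalleyBasisD21a_subset_span S (Rat.castHom ℂ).fieldRange
  have rational x (hx : x ∈ chevalleyBasisD21a br a h e f) y
      (hy : y ∈ chevalleyBasisD21a br a h e f) : ∃ q : ℚ, B x y = q :=
    (mem_subfield _ (SubfieldClass.ratCast_mem _ a) x (subset_span hx) y (subset_span hy)).imp
      fun _ => Eq.symm
  refine ⟨B, invariant, supersymmetric, even, ?_, ?_, ?_, ?_, ?_, ?_, ?_, ?_, ?_, h_e, h_f, e_e,
    f_f, fun i j hij => (e_f i j).trans (if_neg hij), rational⟩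
  all_goals simp [e_f, h_h, cartan, symmetrizer, ha0, div_eq_mul_inv]
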